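/- arXiv:2512.24734 — 2 statements merged into one kernel-verified Lean document; each statement's English description precedes it below -/
import Mathlib

section
/- Let (𝔭_j)_{j∈ℕ} be nonnegative reals with Σ_{j=0}^∞ 𝔭_j < 1 (so that the killing probability 𝔭_Δ := 1 − Σ_{j=0}^∞ 𝔭_j is strictly positive), and let a_k := μ_k(0) be the occupation probabilities of 0 for the boundary random walk started at i₀ = 0. Then the series Σ_{k=0}^∞ a_k converges and Σ_{k=0}^∞ a_k = 1/𝔭_Δ. -/
/-- The substochastic transition matrix of a boundary random walk on ℕ with
jumping measure `p` at the boundary state `0`. -/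
noncomputable def Ptrans (p : ℕ → ℝ) : ℕ → ℕ → ℝ
  | 0, j => p j
  | i + 1, j => if j = i ∨ j = i + 2 then 1 / 2 else 0

/-- The (substochastic) distribution at time `k` of the boundary random walk
with jumping measure `p` started at `i₀`. -/
noncomputable def occ (p : ℕ → ℝ) (i₀ : ℕ) : ℕ → ℕ → ℝ
  | 0 => fun j => if j = i₀ then 1 else 0
  | k + 1 => fun j => ∑' i : ℕ, occ p i₀ k i * Ptrans p i j

/-!
For a bounded function `f`, Dynkin's formula says that the expectation of `f` under `occ p i₀ n`
equals `f i₀` plus the accumulated expectations of `(P - 1) f`.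

With `f = 1` it says that the mass alive at time `n` is `1 - 𝔭_Δ * ∑_{k < n} aₖ`, since mass is
lost only at `0`. Hence `∑ aₖ` converges, and its value is `1 / 𝔭_Δ` as soon as the mass alive
tends to `0`. Two facts give this:

* each `occ p i₀ k j` tends to `0` as `k → ∞`, because `aₖ → 0` and a step from `j + 1` to `j` has
  probability `1 / 2`;
* no mass escapes to infinity. Apply Dynkin's formula to `f = min 1 (j / N)`: it is concave and
  vanishes at `0`, so its expectation grows only through jumps from `0`. It stays below
  `f i₀ + (∑ aₖ) * ∑ⱼ 𝔭ⱼ f j` for all times, which tends to `0` as `N → ∞` by dominated convergence.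
-/

open Filter Topology Finset

/-- A nonnegative kernel whose rows sum to at most `1`; the missing mass of a row is the
probability of being killed there. -/
structure IsSubstochastic {ι κ : Type*} (P : ι → κ → ℝ) : Prop where
  nonneg : ∀ i j, 0 ≤ P i j
  summable : ∀ i, Summable (P i)
  tsum_le_one : ∀ i, ∑' j, P i j ≤ 1

section Kernel

variable {ι κ : Type*} {P : ι → κ → ℝ} {μ : ι → ℝ} {f : κ → ℝ} {C : ℝ}

lemma summable_mul_of_abs_le {g : ι → ℝ} (hμ : Summable μ) (hg : ∀ i, |g i| ≤ C) :
    Summable fun i => μ i * g i :=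
  Summable.of_norm_bounded (hμ.abs.mul_right C) fun i => by
    rw [Real.norm_eq_abs, abs_mul]
    exact mul_le_mul_of_nonneg_left (hg i) (abs_nonneg _)

namespace IsSubstochastic

lemma summable_prod (hP : IsSubstochastic P) (hμ : Summable μ) :
    Summable fun x : ι × κ => μ x.1 * P x.1 x.2 := by
  have abs_mul_P (i : ι) (j : κ) : |μ i * P i j| = |μ i| * P i j := by
    rw [abs_mul, abs_of_nonneg (hP.nonneg i j)]
  refine Summable.of_abs ((summable_prod_of_nonneg fun x => abs_nonneg _).2 ⟨fun i => ?_, ?_⟩)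
  · simpa only [abs_mul_P] using (hP.summable i).mul_left |μ i|
  · simp only [abs_mul_P, tsum_mul_left]
    exact hμ.abs.of_nonneg_of_le
      (fun i => mul_nonneg (abs_nonneg _) (tsum_nonneg (hP.nonneg i)))
      fun i => mul_le_of_le_one_right (abs_nonneg _) (hP.tsum_le_one i)

lemma summable_tsum_mul (hP : IsSubstochastic P) (hμ : Summable μ) :
    Summable fun j => ∑' i, μ i * P i j :=
  (hP.summable_prod hμ).prod_symm.prod

lemma summable_prod_mul (hP : IsSubstochastic P) (hμ : Summable μ) (hf : ∀ j, |f j| ≤ C) :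
    Summable fun x : ι × κ => μ x.1 * P x.1 x.2 * f x.2 :=
  summable_mul_of_abs_le (hP.summable_prod hμ) fun x => hf x.2

lemma summable_mul_tsum_mul (hP : IsSubstochastic P) (hμ : Summable μ) (hf : ∀ j, |f j| ≤ C) :
    Summable fun i => μ i * ∑' j, P i j * f j := by
  simpa only [mul_assoc, tsum_mul_left] using (hP.summable_prod_mul hμ hf).prod

lemma tsum_tsum_mul_mul (hP : IsSubstochastic P) (hμ : Summable μ) (hf : ∀ j, |f j| ≤ C) :
    ∑' j, (∑' i, μ i * P i j) * f j = ∑' i, μ i * ∑' j, P i j * f j := by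
  simp only [← tsum_mul_right, ← tsum_mul_left, ← mul_assoc]
  exact (hP.summable_prod_mul hμ hf).tsum_comm

end IsSubstochastic

end Kernel

section BoundaryWalk

variable {p f : ℕ → ℝ} {i₀ : ℕ} {C : ℝ}

lemma hasSum_Ptrans_succ_mul (p f : ℕ → ℝ) (i : ℕ) :
    HasSum (fun j => Ptrans p (i + 1) j * f j) ((f i + f (i + 2)) / 2) := by
  have support_sum : ∑ j ∈ {i, i + 2}, Ptrans p (i + 1) j * f j = (f i + f (i + 2)) / 2 := by
    rw [sum_pair (by omega)]
    simp only [Ptrans, true_or, or_true, if_true]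
    ring
  rw [← support_sum]
  refine hasSum_sum_of_ne_finset_zero fun j hj => ?_
  rw [mem_insert, mem_singleton] at hj
  simp only [Ptrans, if_neg hj, zero_mul]

lemma hasSum_Ptrans_succ (p : ℕ → ℝ) (i : ℕ) : HasSum (Ptrans p (i + 1)) 1 := by
  simpa using hasSum_Ptrans_succ_mul p (fun _ => 1) i

lemma isSubstochastic_Ptrans (hp0 : ∀ j, 0 ≤ p j) (hpsum : Summable p)
    (hp1 : ∑' j, p j ≤ 1) : IsSubstochastic (Ptrans p) where
  nonneg
    | 0, j => hp0 j
    | i + 1, j => by unfold Ptrans; positivity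
  summable
    | 0 => hpsum
    | i + 1 => (hasSum_Ptrans_succ p i).summable
  tsum_le_one
    | 0 => hp1
    | i + 1 => (hasSum_Ptrans_succ p i).tsum_eq.le

lemma occ_nonneg (hP : IsSubstochastic (Ptrans p)) : ∀ k j, 0 ≤ occ p i₀ k j
  | 0, j => by unfold occ; positivity
  | k + 1, j => tsum_nonneg fun i => mul_nonneg (occ_nonneg hP k i) (hP.nonneg i j)

lemma summable_occ (hP : IsSubstochastic (Ptrans p)) : ∀ k, Summable (occ p i₀ k)
  | 0 => (hasSum_ite_eq i₀ (1 : ℝ)).summable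
  | k + 1 => hP.summable_tsum_mul (summable_occ hP k)

/-- The generator `P - 1` of the boundary walk, acting on functions of the state. -/
noncomputable def generator (p f : ℕ → ℝ) (i : ℕ) : ℝ :=
  ∑' j, Ptrans p i j * f j - f i

lemma generator_zero (p f : ℕ → ℝ) : generator p f 0 = ∑' j, p j * f j - f 0 := rfl

lemma generator_succ (p f : ℕ → ℝ) (i : ℕ) :
    generator p f (i + 1) = (f i + f (i + 2)) / 2 - f (i + 1) := by
  rw [generator, (hasSum_Ptrans_succ_mul p f i).tsum_eq]

lemma summable_occ_mul_generator (hP : IsSubstochastic (Ptrans p)) (hf : ∀ j, |f j| ≤ C)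
    (k : ℕ) : Summable fun i => occ p i₀ k i * generator p f i := by
  have hμ := summable_occ (i₀ := i₀) hP k
  simpa only [generator, mul_sub] using
    (hP.summable_mul_tsum_mul hμ hf).sub (summable_mul_of_abs_le hμ hf)

lemma tsum_occ_succ_mul (hP : IsSubstochastic (Ptrans p)) (hf : ∀ j, |f j| ≤ C) (k : ℕ) :
    ∑' j, occ p i₀ (k + 1) j * f j =
      ∑' j, occ p i₀ k j * f j + ∑' i, occ p i₀ k i * generator p f i := by
  have hμ := summable_occ (i₀ := i₀) hP k
  rw [← (summable_mul_of_abs_le hμ hf).tsum_add (summable_occ_mul_generator hP hf k)]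
  simp only [generator, ← mul_add, add_sub_cancel]
  exact hP.tsum_tsum_mul_mul hμ hf

/-- Dynkin's formula. -/
lemma tsum_occ_mul_eq (hP : IsSubstochastic (Ptrans p)) (hf : ∀ j, |f j| ≤ C) (n : ℕ) :
    ∑' j, occ p i₀ n j * f j =
      f i₀ + ∑ k ∈ range n, ∑' i, occ p i₀ k i * generator p f i := by
  induction n with
  | zero => simp [occ]
  | succ n ih => rw [tsum_occ_succ_mul hP hf, ih, sum_range_succ, add_assoc]

lemma tsum_occ_eq (hP : IsSubstochastic (Ptrans p)) (n : ℕ) :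
    ∑' j, occ p i₀ n j = 1 - (1 - ∑' j, p j) * ∑ k ∈ range n, occ p i₀ k 0 := by
  have generator_one_succ (i : ℕ) : generator p (fun _ => 1) (i + 1) = 0 := by
    rw [generator_succ]
    norm_num
  have mass_change (k : ℕ) : ∑' i, occ p i₀ k i * generator p (fun _ => 1) i =
      -((1 - ∑' j, p j) * occ p i₀ k 0) := by
    rw [tsum_eq_single 0]
    · simp only [generator_zero, mul_one]
      ring
    · rintro (_ | i) hi
      · contradiction
      · rw [generator_one_succ, mul_zero]
  have dynkin := tsum_occ_mul_eq (i₀ := i₀) hP (f := fun _ => 1) (C := 1) (by simp) n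
  simpa only [mul_one, mass_change, sum_neg_distrib, ← mul_sum, ← sub_eq_add_neg] using dynkin

lemma sum_occ_zero_le (hP : IsSubstochastic (Ptrans p)) (hp1 : ∑' j, p j < 1) (n : ℕ) :
    ∑ k ∈ range n, occ p i₀ k 0 ≤ 1 / (1 - ∑' j, p j) := by
  rw [le_div_iff₀' (sub_pos.2 hp1)]
  have mass_nonneg : 0 ≤ ∑' j, occ p i₀ n j := tsum_nonneg (occ_nonneg hP n)
  rwa [tsum_occ_eq hP, sub_nonneg] at mass_nonneg

lemma occ_succ_right_le_two_mul (hP : IsSubstochastic (Ptrans p)) (k j : ℕ) :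
    occ p i₀ k (j + 1) ≤ 2 * occ p i₀ (k + 1) j := by
  have summable_inflow : Summable fun i => occ p i₀ k i * Ptrans p i j :=
    (hP.summable_prod (summable_occ hP k)).prod_symm.prod_factor j
  have inflow_le : occ p i₀ k (j + 1) * Ptrans p (j + 1) j ≤ occ p i₀ (k + 1) j :=
    summable_inflow.le_tsum (j + 1) fun i _ => mul_nonneg (occ_nonneg hP k i) (hP.nonneg i j)
  simp only [Ptrans, true_or, if_true] at inflow_le
  linarith

lemma tendsto_occ_zero (hP : IsSubstochastic (Ptrans p)) (hp1 : ∑' j, p j < 1) (j : ℕ) :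
    Tendsto (fun k => occ p i₀ k j) atTop (𝓝 0) := by
  induction j with
  | zero =>
    exact (summable_of_sum_range_le (fun k => occ_nonneg hP k 0)
      (sum_occ_zero_le hP hp1)).tendsto_atTop_zero
  | succ j ih =>
    have upper : Tendsto (fun k => 2 * occ p i₀ (k + 1) j) atTop (𝓝 0) := by
      simpa using (ih.comp (tendsto_add_atTop_nat 1)).const_mul 2
    exact squeeze_zero (fun k => occ_nonneg hP k (j + 1))
      (fun k => occ_succ_right_le_two_mul hP k j) upper

/-- The concave function rising linearly from `0` at the origin to `1` at `N` and constant from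
there on (`ramp 0 = 0`, as `j / 0 = 0`). It is superharmonic for the walk away from `0`, and for
`0 < N` it dominates the indicator of `[N, ∞)`. -/
noncomputable def ramp (N j : ℕ) : ℝ := min 1 (j / N)

lemma ramp_nonneg (N j : ℕ) : 0 ≤ ramp N j := le_min zero_le_one (by positivity)

lemma abs_ramp_le_one (N j : ℕ) : |ramp N j| ≤ 1 := by
  rw [abs_of_nonneg (ramp_nonneg N j)]
  exact min_le_left _ _

lemma ramp_zero_right (N : ℕ) : ramp N 0 = 0 := by simp [ramp]

lemma ramp_of_le {N j : ℕ} (hN : 0 < N) (hj : N ≤ j) : ramp N j = 1 :=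
  min_eq_left ((one_le_div (by positivity)).2 (by exact_mod_cast hj))

lemma ramp_add_ramp_le (N i : ℕ) : ramp N i + ramp N (i + 2) ≤ 2 * ramp N (i + 1) := by
  have midpoint : (i : ℝ) / N + ((i + 2 : ℕ) : ℝ) / N = 2 * (((i + 1 : ℕ) : ℝ) / N) := by
    push_cast
    ring
  unfold ramp
  grind

lemma tendsto_ramp_zero (j : ℕ) : Tendsto (fun N => ramp N j) atTop (𝓝 0) :=
  squeeze_zero (fun N => ramp_nonneg N j) (fun _ => min_le_right _ _)
    (tendsto_const_div_atTop_nhds_zero_nat (j : ℝ))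

lemma tendsto_tsum_mul_ramp_zero (hpsum : Summable p) :
    Tendsto (fun N => ∑' j, p j * ramp N j) atTop (𝓝 0) := by
  have pointwise (j : ℕ) : Tendsto (fun N => p j * ramp N j) atTop (𝓝 0) := by
    simpa using (tendsto_ramp_zero j).const_mul (p j)
  rw [← tsum_zero (α := ℝ) (β := ℕ)]
  refine tendsto_tsum_of_dominated_convergence hpsum.abs pointwise (.of_forall fun N j => ?_)
  rw [Real.norm_eq_abs, abs_mul]
  exact mul_le_of_le_one_right (abs_nonneg _) (abs_ramp_le_one N j)

lemma tsum_occ_mul_ramp_le (hP : IsSubstochastic (Ptrans p)) (N n : ℕ) :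
    ∑' j, occ p i₀ n j * ramp N j ≤
      ramp N i₀ + (∑ k ∈ range n, occ p i₀ k 0) * ∑' j, p j * ramp N j := by
  have generator_ramp_succ (i : ℕ) : generator p (ramp N) (i + 1) ≤ 0 := by
    rw [generator_succ]
    linarith [ramp_add_ramp_le N i]
  have ramp_change_le (k : ℕ) : ∑' i, occ p i₀ k i * generator p (ramp N) i ≤
      occ p i₀ k 0 * ∑' j, p j * ramp N j := by
    rw [(summable_occ_mul_generator hP (abs_ramp_le_one N) k).tsum_eq_zero_add, generator_zero,
      ramp_zero_right, sub_zero, add_le_iff_nonpos_right]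
    exact tsum_nonpos fun i =>
      mul_nonpos_of_nonneg_of_nonpos (occ_nonneg hP k _) (generator_ramp_succ i)
  rw [tsum_occ_mul_eq hP (abs_ramp_le_one N), sum_mul]
  gcongr with k
  exact ramp_change_le k

lemma tsum_occ_le_sum_add (hP : IsSubstochastic (Ptrans p)) {N : ℕ} (hN : 0 < N) (n : ℕ) :
    ∑' j, occ p i₀ n j ≤ ∑ j ∈ range N, occ p i₀ n j + ∑' j, occ p i₀ n j * ramp N j := by
  have hμ := summable_occ (i₀ := i₀) hP n
  have hμ_ramp := summable_mul_of_abs_le hμ (abs_ramp_le_one N)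
  have tail_eq : ∑' j, occ p i₀ n (j + N) = ∑' j, occ p i₀ n (j + N) * ramp N (j + N) :=
    tsum_congr fun j => by rw [ramp_of_le hN (N.le_add_left j), mul_one]
  have head_nonneg : 0 ≤ ∑ j ∈ range N, occ p i₀ n j * ramp N j :=
    sum_nonneg fun j _ => mul_nonneg (occ_nonneg hP n j) (ramp_nonneg N j)
  rw [← hμ.sum_add_tsum_nat_add N, ← hμ_ramp.sum_add_tsum_nat_add N, tail_eq]
  linarith

lemma tendsto_tsum_occ_zero (hP : IsSubstochastic (Ptrans p)) (hp1 : ∑' j, p j < 1) :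
    Tendsto (fun n => ∑' j, occ p i₀ n j) atTop (𝓝 0) := by
  have hpsum : Summable p := hP.summable 0
  set A := 1 / (1 - ∑' j, p j)
  have tail_bound_tendsto :
      Tendsto (fun N => ramp N i₀ + A * ∑' j, p j * ramp N j) atTop (𝓝 0) := by
    simpa using (tendsto_ramp_zero i₀).add
      ((tendsto_tsum_mul_ramp_zero hpsum).const_mul A)
  have jump_nonneg (N : ℕ) : 0 ≤ ∑' j, p j * ramp N j :=
    tsum_nonneg fun j => mul_nonneg (hP.nonneg 0 j) (ramp_nonneg N j)
  refine tendsto_order.2 ⟨fun ε hε => .of_forall fun n =>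
    hε.trans_le (tsum_nonneg (occ_nonneg hP n)), fun ε hε => ?_⟩
  obtain ⟨N, tail_lt, hN⟩ :=
    ((tail_bound_tendsto.eventually_lt_const (half_pos hε)).and (eventually_gt_atTop 0)).exists
  have head_tendsto : Tendsto (fun n => ∑ j ∈ range N, occ p i₀ n j) atTop (𝓝 0) := by
    simpa using tendsto_finsetSum (range N) fun j _ => tendsto_occ_zero (i₀ := i₀) hP hp1 j
  filter_upwards [head_tendsto.eventually_lt_const (half_pos hε)] with n head_lt
  calc ∑' j, occ p i₀ n j
      ≤ ∑ j ∈ range N, occ p i₀ n j + ∑' j, occ p i₀ n j * ramp N j :=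
        tsum_occ_le_sum_add hP hN n
    _ ≤ ∑ j ∈ range N, occ p i₀ n j + (ramp N i₀ + A * ∑' j, p j * ramp N j) := by
        grw [tsum_occ_mul_ramp_le hP N n, sum_occ_zero_le hP hp1 n]
        exact jump_nonneg N
    _ < ε := by linarith

end BoundaryWalk

theorem stmt3_general (p : ℕ → ℝ) (hp0 : ∀ j, 0 ≤ p j) (hpsum : Summable p)
    (hp1 : ∑' j, p j < 1) (i₀ : ℕ) :
    HasSum (fun k => occ p i₀ k 0) (1 / (1 - ∑' j, p j)) := by
  have hP := isSubstochastic_Ptrans hp0 hpsum hp1.le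
  have kill_ne : 1 - ∑' j, p j ≠ 0 := (sub_pos.2 hp1).ne'
  have visits_eq (n : ℕ) : ∑ k ∈ range n, occ p i₀ k 0 =
      (1 - ∑' j, occ p i₀ n j) / (1 - ∑' j, p j) := by
    rw [tsum_occ_eq hP, sub_sub_cancel, mul_div_cancel_left₀ _ kill_ne]
  rw [hasSum_iff_tendsto_nat_of_nonneg fun k => occ_nonneg hP k 0]
  simpa only [visits_eq, sub_zero] using
    ((tendsto_tsum_occ_zero hP hp1).const_sub 1).div_const (1 - ∑' j, p j)

/-- If the killing probability `𝔭_Δ = 1 - ∑ⱼ 𝔭ⱼ` is strictly positive, then the total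
expected time spent at `0` by the boundary random walk started at `0` is `1/𝔭_Δ`. -/
theorem stmt3 (p : ℕ → ℝ) (hp0 : ∀ j, 0 ≤ p j) (hpsum : Summable p)
    (hp1 : ∑' j : ℕ, p j < 1) :
    Summable (fun k : ℕ => occ p 0 k 0) ∧
      ∑' k : ℕ, occ p 0 k 0 = 1 / (1 - ∑' j : ℕ, p j) :=
  have visits := stmt3_general p hp0 hpsum hp1 0
  ⟨visits.summable, visits.tsum_eq⟩
end

section
/- Let p₁ ≥ 0 and p₂ > 0 be constants, and let μ be a nonnegative Borel measure on ℝ carried by (0,∞) with ∫_{(0,∞)} min(x,1) dμ(x) < ∞. Let f : ℝ → ℝ be continuous on [0,∞), satisfy |f(x) − f(0)| ≤ C min(x,1) for all x ≥ 0 for some constant C, and be right-differentiable at 0 with right derivative f'(0). For each integer n ≥ 2 set 𝔭₁^{(n)} := 1 − p₁/(n p₂) − Σ_{j=2}^{n²−1} μ((j/n,(j+1)/n])/(n p₂) and D'_n := −(p₁/(n p₂)) f(0) + 𝔭₁^{(n)} (f(1/n) − f(0)) + Σ_{j=2}^{n²−1} (μ((j/n,(j+1)/n])/(n p₂)) (f(j/n)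 − f(0)). Then lim_{n→∞} n · D'_n = (−p₁ f(0) + p₂ f'(0) + ∫_{(0,∞)} (f(x) − f(0)) dμ(x)) / p₂. -/
open MeasureTheory

open Filter Set Topology

/-!
Multiplying `D'_n` by `n` splits it into three parts. The killing term is constant in `n`. In the
reflection term, `n (f(1/n) - f(0)) → f'(0)` while `𝔭₁⁽ⁿ⁾ → 1`, because `ε μ(ε, ∞) → 0` as `ε → 0`
whenever `min(x, 1)` is `μ`-integrable. The jump term is the integral of `f - f(0)` sampled at the
left endpoints of the cells of the grid `ℕ/n`; as `min(x, 1)` is monotone, sampling to the left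
preserves the bound `C min(x, 1)`, and dominated convergence applies.
-/

section LittleO

variable {α F : Type*} [MeasurableSpace α] {μ : Measure α} [NormedAddCommGroup F]

theorem norm_min_norm_le {ε : ℝ} (hε : 0 ≤ ε) (v : F) : ‖min ε ‖v‖‖ ≤ ‖v‖ := by
  rw [Real.norm_of_nonneg (le_min hε (norm_nonneg _))]
  exact min_le_right _ _

theorem tendsto_integral_min_norm_nhdsGT_zero {g : α → F} (hg : Integrable g μ) :
    Tendsto (fun ε : ℝ => ∫ x, min ε ‖g x‖ ∂μ) (𝓝[>] 0) (𝓝 0) := by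
  suffices Tendsto (fun ε : ℝ => ∫ x, min ε ‖g x‖ ∂μ) (𝓝[>] 0) (𝓝 (∫ _, (0 : ℝ) ∂μ)) by
    rwa [integral_zero] at this
  refine tendsto_integral_filter_of_dominated_convergence (fun x => ‖g x‖)
    (.of_forall fun ε => aestronglyMeasurable_const.inf hg.norm.aestronglyMeasurable)
    ?_ hg.norm (.of_forall fun x => ?_)
  · filter_upwards [self_mem_nhdsWithin] with ε (hε : 0 < ε)
    exact .of_forall fun x => norm_min_norm_le hε.le (g x)
  · have hmin : Tendsto (fun ε : ℝ => min ε ‖g x‖) (𝓝 0) (𝓝 (min 0 ‖g x‖)) :=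
      tendsto_id.min tendsto_const_nhds
    rw [min_eq_left (norm_nonneg _)] at hmin
    exact hmin.mono_left nhdsWithin_le_nhds

theorem tendsto_mul_measureReal_le_norm_nhdsGT_zero {g : α → F} (hg : Integrable g μ) :
    Tendsto (fun ε : ℝ => ε * μ.real {x | ε ≤ ‖g x‖}) (𝓝[>] 0) (𝓝 0) := by
  refine squeeze_zero' ?_ ?_ (tendsto_integral_min_norm_nhdsGT_zero hg)
  · filter_upwards [self_mem_nhdsWithin] with ε (hε : 0 < ε) using by positivity
  · filter_upwards [self_mem_nhdsWithin] with ε (hε : 0 < ε)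
    have hmin_nonneg : 0 ≤ fun x => min ε ‖g x‖ := fun x => le_min hε.le (norm_nonneg _)
    have hmin_int : Integrable (fun x => min ε ‖g x‖) μ :=
      hg.norm.mono' (aestronglyMeasurable_const.inf hg.norm.aestronglyMeasurable)
        (.of_forall fun x => norm_min_norm_le hε.le (g x))
    simpa only [le_min_iff, le_refl, true_and] using
      mul_meas_ge_le_integral_of_nonneg (.of_forall hmin_nonneg) hmin_int ε

end LittleO

section Derivative

variable {E : Type*} [NormedAddCommGroup E] [NormedSpace ℝ E]

theorem tendsto_natCast_smul_sub_of_hasDerivWithinAt_Ici {f : ℝ → E} {f' : E} {x : ℝ}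
    (hf : HasDerivWithinAt f f' (Ici x) x) :
    Tendsto (fun n : ℕ => (n : ℝ) • (f (x + 1 / n) - f x)) atTop (𝓝 f') := by
  have hscale : Tendsto (fun n : ℕ => (n : ℝ) • (1 / (n : ℝ))) atTop (𝓝 1) := by
    refine tendsto_const_nhds.congr' ?_
    filter_upwards [eventually_ne_atTop 0] with n hn
    rw [smul_eq_mul, mul_one_div_cancel (Nat.cast_ne_zero.2 hn)]
  have hmem : ∀ᶠ n : ℕ in atTop, x + 1 / (n : ℝ) ∈ Ici x :=
    .of_forall fun n => by simp
  simpa using hf.hasFDerivWithinAt.lim tendsto_one_div_atTop_nhds_zero_nat hmem hscale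

end Derivative

section Grid

/-- The left endpoint `j / n` of the cell `(j / n, (j + 1) / n]` containing `x`, for `n ≠ 0`.
Composing `g` with it gives the step function that samples `g` at left endpoints. -/
noncomputable def leftGridPoint (n : ℕ) (x : ℝ) : ℝ := (⌈n * x⌉ - 1) / n

variable {n : ℕ}

theorem leftGridPoint_eq_of_mem_Ioc (hn : n ≠ 0) {j : ℕ} {x : ℝ}
    (hx : x ∈ Ioc ((j : ℝ) / n) ((j + 1) / n)) : leftGridPoint n x = j / n := by
  have hn' : (0 : ℝ) < n := by positivity
  have hceil : ⌈n * x⌉ = (j : ℤ) + 1 := by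
    rw [Int.ceil_eq_iff]
    push_cast
    rw [add_sub_cancel_right]
    exact ⟨(div_lt_iff₀' hn').1 hx.1, (le_div_iff₀' hn').1 hx.2⟩
  simp [leftGridPoint, hceil]

theorem leftGridPoint_lt (hn : n ≠ 0) (x : ℝ) : leftGridPoint n x < x := by
  rw [leftGridPoint, div_lt_iff₀' (by positivity)]
  linarith [Int.ceil_lt_add_one (n * x)]

theorem sub_one_div_le_leftGridPoint (hn : n ≠ 0) (x : ℝ) : x - 1 / n ≤ leftGridPoint n x := by
  have hn' : (0 : ℝ) < n := by positivity
  rw [leftGridPoint, le_div_iff₀' hn', mul_sub, mul_one_div_cancel hn'.ne']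
  linarith [Int.le_ceil (n * x)]

theorem div_le_leftGridPoint (hn : n ≠ 0) {m : ℕ} {x : ℝ} (hx : (m : ℝ) / n < x) :
    (m : ℝ) / n ≤ leftGridPoint n x := by
  rw [div_lt_iff₀' (by positivity)] at hx
  have hceil : (m : ℤ) + 1 ≤ ⌈n * x⌉ := Int.add_one_le_iff.2 (Int.lt_ceil.2 (mod_cast hx))
  rw [leftGridPoint]
  gcongr
  rw [le_sub_iff_add_le]
  exact_mod_cast hceil

theorem tendsto_leftGridPoint (x : ℝ) :
    Tendsto (fun n : ℕ => leftGridPoint n x) atTop (𝓝 x) := by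
  have hlower : Tendsto (fun n : ℕ => x - 1 / (n : ℝ)) atTop (𝓝 x) := by
    simpa using (tendsto_one_div_atTop_nhds_zero_nat (𝕜 := ℝ)).const_sub x
  refine tendsto_of_tendsto_of_tendsto_of_le_of_le' hlower tendsto_const_nhds ?_ ?_
  · filter_upwards [eventually_ne_atTop 0] with n hn using sub_one_div_le_leftGridPoint hn x
  · filter_upwards [eventually_ne_atTop 0] with n hn using (leftGridPoint_lt hn x).le

theorem monotone_natCast_div (n : ℕ) : Monotone fun j : ℕ => (j : ℝ) / n :=
  fun i j hij => by dsimp only; gcongr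

theorem biUnion_Ico_Ioc_natCast_div (n a b : ℕ) :
    ⋃ j ∈ Finset.Ico a b, Ioc ((j : ℝ) / n) ((j + 1) / n) = Ioc ((a : ℝ) / n) (b / n) := by
  simpa using (monotone_natCast_div n).biUnion_Ico_Ioc_map_succ a b

theorem pairwise_disjoint_Ioc_natCast_div (n : ℕ) :
    Pairwise (Function.onFun Disjoint fun j : ℕ => Ioc ((j : ℝ) / n) ((j + 1) / n)) := by
  simpa using (monotone_natCast_div n).pairwise_disjoint_on_Ioc_succ

end Grid

section GridSum

variable {E : Type*} [NormedAddCommGroup E] {μ : Measure ℝ} {n a b : ℕ}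

theorem integrableOn_comp_leftGridPoint (hn : n ≠ 0) (hfin : μ (Ioc ((a : ℝ) / n) (b / n)) ≠ ⊤)
    (g : ℝ → E) :
    IntegrableOn (fun x => g (leftGridPoint n x)) (Ioc ((a : ℝ) / n) (b / n)) μ := by
  rw [← biUnion_Ico_Ioc_natCast_div] at hfin ⊢
  refine integrableOn_finset_iUnion.2 fun j hj => ?_
  have hcell : μ (Ioc ((j : ℝ) / n) ((j + 1) / n)) ≠ ⊤ :=
    measure_ne_top_of_subset (subset_biUnion_of_mem
      (u := fun i : ℕ => Ioc ((i : ℝ) / n) ((i + 1) / n)) hj) hfin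
  exact (integrableOn_const hcell (C := g (j / n))).congr_fun
    (fun x hx => by rw [leftGridPoint_eq_of_mem_Ioc hn hx]) measurableSet_Ioc

theorem norm_indicator_comp_leftGridPoint_le {g : ℝ → E} {h : ℝ → ℝ}
    (hmono : MonotoneOn h (Ioi 0)) (hbound : ∀ x > 0, ‖g x‖ ≤ h x) (hn : n ≠ 0) (ha : a ≠ 0)
    {x : ℝ} (hx : 0 < x) :
    ‖(Ioc ((a : ℝ) / n) (b / n)).indicator (fun y => g (leftGridPoint n y)) x‖ ≤ h x := by
  by_cases hmem : x ∈ Ioc ((a : ℝ) / n) (b / n)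
  · have hpos : 0 < leftGridPoint n x :=
      lt_of_lt_of_le (by positivity) (div_le_leftGridPoint hn hmem.1)
    rw [indicator_of_mem hmem]
    exact (hbound _ hpos).trans (hmono hpos hx (leftGridPoint_lt hn x).le)
  · rw [indicator_of_notMem hmem, norm_zero]
    exact (norm_nonneg _).trans (hbound x hx)

theorem tendsto_indicator_comp_leftGridPoint {N : ℕ → ℕ} (a : ℕ)
    (hN : Tendsto (fun n => (N n : ℝ) / n) atTop atTop) {g : ℝ → E} {x : ℝ} (hx : 0 < x)
    (hg : ContinuousAt g x) :
    Tendsto (fun n : ℕ => (Ioc ((a : ℝ) / n) (N n / n)).indicator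
      (fun y => g (leftGridPoint n y)) x) atTop (𝓝 (g x)) := by
  refine (hg.tendsto.comp (tendsto_leftGridPoint x)).congr' ?_
  have hleft : ∀ᶠ n : ℕ in atTop, (a : ℝ) / n < x :=
    (tendsto_const_div_atTop_nhds_zero_nat (a : ℝ)).eventually_lt_const hx
  filter_upwards [hleft, hN.eventually_ge_atTop x] with n hax hxN
  rw [indicator_of_mem (show x ∈ Ioc _ _ from ⟨hax, hxN⟩), Function.comp_apply]

variable [NormedSpace ℝ E] [CompleteSpace E]

theorem sum_measureReal_smul_eq_setIntegral_leftGridPoint (hn : n ≠ 0)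
    (hfin : μ (Ioc ((a : ℝ) / n) (b / n)) ≠ ⊤) (g : ℝ → E) :
    ∑ j ∈ Finset.Ico a b, μ.real (Ioc ((j : ℝ) / n) ((j + 1) / n)) • g (j / n) =
      ∫ x in Ioc ((a : ℝ) / n) (b / n), g (leftGridPoint n x) ∂μ := by
  have hint := integrableOn_comp_leftGridPoint hn hfin g
  rw [← biUnion_Ico_Ioc_natCast_div] at hint ⊢
  rw [integral_biUnion_finset _ (fun _ _ => measurableSet_Ioc)
    ((pairwise_disjoint_Ioc_natCast_div n).set_pairwise _) (integrableOn_finset_iUnion.1 hint)]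
  refine Finset.sum_congr rfl fun j _ => ?_
  rw [← setIntegral_const]
  exact setIntegral_congr_fun measurableSet_Ioc
    fun x hx => by rw [leftGridPoint_eq_of_mem_Ioc hn hx]

theorem sum_measureReal_Ioc_natCast_div (hn : n ≠ 0)
    (hfin : μ (Ioc ((a : ℝ) / n) (b / n)) ≠ ⊤) :
    ∑ j ∈ Finset.Ico a b, μ.real (Ioc ((j : ℝ) / n) ((j + 1) / n)) =
      μ.real (Ioc ((a : ℝ) / n) (b / n)) := by
  simpa using sum_measureReal_smul_eq_setIntegral_leftGridPoint hn hfin fun _ => (1 : ℝ)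

theorem tendsto_sum_measureReal_smul_setIntegral_Ioi {g : ℝ → E} {h : ℝ → ℝ} {N : ℕ → ℕ}
    (hfin : ∀ ε > 0, μ (Ioi ε) ≠ ⊤) (ha : a ≠ 0)
    (hN : Tendsto (fun n => (N n : ℝ) / n) atTop atTop)
    (hmono : MonotoneOn h (Ioi 0)) (hint : IntegrableOn h (Ioi 0) μ)
    (hbound : ∀ x > 0, ‖g x‖ ≤ h x) (hcont : ∀ᵐ x ∂μ.restrict (Ioi 0), ContinuousAt g x) :
    Tendsto (fun n : ℕ => ∑ j ∈ Finset.Ico a (N n),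
        μ.real (Ioc ((j : ℝ) / n) ((j + 1) / n)) • g (j / n))
      atTop (𝓝 (∫ x in Ioi 0, g x ∂μ)) := by
  let cells (n : ℕ) : Set ℝ := Ioc ((a : ℝ) / n) (N n / n)
  have hcells_fin {n : ℕ} (hn : n ≠ 0) : μ (cells n) ≠ ⊤ :=
    measure_ne_top_of_subset Ioc_subset_Ioi_self (hfin _ (by positivity))
  have hlim : Tendsto
      (fun n => ∫ x in Ioi 0, (cells n).indicator (fun y => g (leftGridPoint n y)) x ∂μ)
      atTop (𝓝 (∫ x in Ioi 0, g x ∂μ)) := by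
    refine tendsto_integral_filter_of_dominated_convergence h ?_ ?_ hint ?_
    · filter_upwards [eventually_ne_atTop 0] with n hn
      exact ((integrableOn_comp_leftGridPoint hn (hcells_fin hn) g).integrable_indicator
        measurableSet_Ioc).aestronglyMeasurable.restrict
    · filter_upwards [eventually_ne_atTop 0] with n hn
      filter_upwards [ae_restrict_mem measurableSet_Ioi] with x hx
      exact norm_indicator_comp_leftGridPoint_le hmono hbound hn ha hx
    · filter_upwards [ae_restrict_mem measurableSet_Ioi, hcont] with x hx hgx
      exact tendsto_indicator_comp_leftGridPoint a hN hx hgx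
  refine hlim.congr' ?_
  filter_upwards [eventually_ne_atTop 0] with n hn
  have hcells_pos : cells n ⊆ Ioi 0 := fun x hx => lt_of_le_of_lt (by positivity) hx.1
  rw [sum_measureReal_smul_eq_setIntegral_leftGridPoint hn (hcells_fin hn),
    setIntegral_indicator measurableSet_Ioc, inter_eq_right.2 hcells_pos]

end GridSum

section Boundary

variable {μ : Measure ℝ}

theorem Ioi_subset_setOf_le_norm_min_one {ε : ℝ} (hε : ε ≤ 1) :
    Ioi ε ⊆ {x | ε ≤ ‖min x 1‖} := fun _ hx =>
  (le_min (le_of_lt hx) hε).trans (Real.le_norm_self _)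

theorem measure_Ioi_ne_top_of_integrableOn_min_one
    (hI : IntegrableOn (fun x => min x 1) (Ioi 0) μ) {ε : ℝ} (hε : 0 < ε) : μ (Ioi ε) ≠ ⊤ := by
  have hδ : 0 < min ε 1 := lt_min hε one_pos
  have hlevel := hI.measure_norm_ge_lt_top hδ
  rw [Measure.restrict_apply' measurableSet_Ioi] at hlevel
  have hsubset : Ioi ε ⊆ {x | min ε 1 ≤ ‖min x 1‖} :=
    (Ioi_subset_Ioi (min_le_left ε 1)).trans
      (Ioi_subset_setOf_le_norm_min_one (min_le_right ε 1))
  exact measure_ne_top_of_subset (subset_inter hsubset (Ioi_subset_Ioi hε.le)) hlevel.ne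

theorem tendsto_mul_measureReal_Ioi_nhdsGT_zero
    (hI : IntegrableOn (fun x => min x 1) (Ioi 0) μ) :
    Tendsto (fun ε : ℝ => ε * μ.real (Ioi ε)) (𝓝[>] 0) (𝓝 0) := by
  refine squeeze_zero' ?_ ?_ (tendsto_mul_measureReal_le_norm_nhdsGT_zero hI)
  · filter_upwards [self_mem_nhdsWithin] with ε (hε : 0 < ε) using by positivity
  · filter_upwards [Ioc_mem_nhdsGT one_pos] with ε ⟨hε, hε_le⟩
    have hrestrict : μ.real (Ioi ε) = (μ.restrict (Ioi 0)).real (Ioi ε) := by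
      rw [measureReal_restrict_apply measurableSet_Ioi, inter_eq_left.2 (Ioi_subset_Ioi hε.le)]
    rw [hrestrict]
    gcongr
    · exact (hI.measure_norm_ge_lt_top hε).ne
    · exact Ioi_subset_setOf_le_norm_min_one hε_le

theorem tendsto_sum_measureReal_div_natCast (hI : IntegrableOn (fun x => min x 1) (Ioi 0) μ)
    {a : ℕ} (ha : a ≠ 0) (N : ℕ → ℕ) :
    Tendsto (fun n : ℕ => (∑ j ∈ Finset.Ico a (N n),
      μ.real (Ioc ((j : ℝ) / n) ((j + 1) / n))) / n) atTop (𝓝 0) := by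
  have htail : Tendsto (fun n : ℕ => (n : ℝ)⁻¹ * μ.real (Ioi (n : ℝ)⁻¹)) atTop (𝓝 0) :=
    (tendsto_mul_measureReal_Ioi_nhdsGT_zero hI).comp
      (tendsto_inv_atTop_nhdsGT_zero.comp tendsto_natCast_atTop_atTop)
  refine squeeze_zero' (.of_forall fun n => by positivity) ?_ htail
  filter_upwards [eventually_ne_atTop 0] with n hn
  have htail_fin : μ (Ioi (n : ℝ)⁻¹) ≠ ⊤ :=
    measure_Ioi_ne_top_of_integrableOn_min_one hI (by positivity)
  have hsubset : Ioc ((a : ℝ) / n) (N n / n) ⊆ Ioi (n : ℝ)⁻¹ := by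
    have hmesh : (n : ℝ)⁻¹ ≤ a / n := by
      rw [inv_eq_one_div]
      gcongr
      exact_mod_cast Nat.one_le_iff_ne_zero.2 ha
    exact Ioc_subset_Ioi_self.trans (Ioi_subset_Ioi hmesh)
  rw [sum_measureReal_Ioc_natCast_div hn (measure_ne_top_of_subset hsubset htail_fin),
    div_eq_inv_mul]
  gcongr

/-- The probability `𝔭₁⁽ⁿ⁾` that the boundary random walk steps from `0` to the neighbouring site:
what is left after killing (rate `p₁`) and jumps to the sites `2 ≤ j < n²` (rates given by `μ`). -/
noncomputable def reflectionProb (p₁ p₂ : ℝ) (μ : Measure ℝ) (n : ℕ) : ℝ :=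
  1 - p₁ / (n * p₂) -
    (∑ j ∈ Finset.Ico 2 (n ^ 2), μ.real (Ioc ((j : ℝ) / n) ((j + 1) / n))) / (n * p₂)

theorem tendsto_reflectionProb (p₁ p₂ : ℝ) (hI : IntegrableOn (fun x => min x 1) (Ioi 0) μ) :
    Tendsto (reflectionProb p₁ p₂ μ) atTop (𝓝 1) := by
  have hkill := (tendsto_const_div_atTop_nhds_zero_nat p₁).div_const p₂
  have hjump := (tendsto_sum_measureReal_div_natCast hI two_ne_zero (· ^ 2)).div_const p₂
  unfold reflectionProb
  simpa only [div_div, zero_div, sub_zero] using (hkill.const_sub 1).sub hjump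

variable {E : Type*} [NormedAddCommGroup E] [NormedSpace ℝ E]

theorem tendsto_sum_jumps [CompleteSpace E] (hI : IntegrableOn (fun x => min x 1) (Ioi 0) μ)
    {f : ℝ → E} (hf : ∀ᵐ x ∂μ.restrict (Ioi 0), ContinuousAt f x)
    {C : ℝ} (hdom : ∀ x, 0 ≤ x → ‖f x - f 0‖ ≤ C * min x 1) :
    Tendsto (fun n : ℕ => ∑ j ∈ Finset.Ico 2 (n ^ 2),
        μ.real (Ioc ((j : ℝ) / n) ((j + 1) / n)) • (f (j / n) - f 0))
      atTop (𝓝 (∫ x in Ioi 0, (f x - f 0) ∂μ)) := by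
  have hC : 0 ≤ C := by simpa using (norm_nonneg _).trans (hdom 1 zero_le_one)
  have hmono : Monotone fun x : ℝ => C * min x 1 :=
    (monotone_id.min monotone_const).const_mul hC
  have hN : Tendsto (fun n : ℕ => ((n ^ 2 : ℕ) : ℝ) / n) atTop atTop :=
    tendsto_natCast_atTop_atTop.congr fun n => by
      push_cast
      rw [pow_two, mul_self_div_self]
  exact tendsto_sum_measureReal_smul_setIntegral_Ioi
    (fun ε hε => measure_Ioi_ne_top_of_integrableOn_min_one hI hε) two_ne_zero hN
    (hmono.monotoneOn _) (hI.const_mul C) (fun x hx => hdom x hx.le)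
    (hf.mono fun x hx => hx.sub continuousAt_const)

theorem natCast_smul_generator_eq {n : ℕ} (hn : n ≠ 0) (p₁ p₂ : ℝ) (μ : Measure ℝ) (f : ℝ → E) :
    (n : ℝ) • (-(p₁ / (n * p₂)) • f 0 + reflectionProb p₁ p₂ μ n • (f (1 / n) - f 0)
        + ∑ j ∈ Finset.Ico 2 (n ^ 2),
            (μ.real (Ioc ((j : ℝ) / n) ((j + 1) / n)) / (n * p₂)) • (f (j / n) - f 0)) =
      -(p₁ / p₂) • f 0 + reflectionProb p₁ p₂ μ n • (n : ℝ) • (f (1 / n) - f 0)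
        + p₂⁻¹ • ∑ j ∈ Finset.Ico 2 (n ^ 2),
            μ.real (Ioc ((j : ℝ) / n) ((j + 1) / n)) • (f (j / n) - f 0) := by
  have hcancel (r : ℝ) : (n : ℝ) * (r / (n * p₂)) = r / p₂ := by
    rw [← mul_div_assoc, mul_div_mul_left _ _ (Nat.cast_ne_zero.2 hn)]
  simp only [smul_add, Finset.smul_sum, smul_smul, mul_neg, hcancel, div_eq_inv_mul _ p₂,
    mul_comm (reflectionProb p₁ p₂ μ n)]

theorem stmt17_general [CompleteSpace E] (p₁ p₂ : ℝ) (hp₂ : p₂ ≠ 0) (μ : Measure ℝ)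
    (hI : IntegrableOn (fun x => min x 1) (Ioi 0) μ)
    (f : ℝ → E) (hf : ∀ᵐ x ∂μ.restrict (Ioi 0), ContinuousAt f x)
    (C : ℝ) (hdom : ∀ x, 0 ≤ x → ‖f x - f 0‖ ≤ C * min x 1)
    (f'0 : E) (hder : HasDerivWithinAt f f'0 (Ici 0) 0) :
    Tendsto
      (fun n : ℕ => (n : ℝ) •
        (-(p₁ / (n * p₂)) • f 0 + reflectionProb p₁ p₂ μ n • (f (1 / n) - f 0)
          + ∑ j ∈ Finset.Ico 2 (n ^ 2),
              (μ.real (Ioc ((j : ℝ) / n) ((j + 1) / n)) / (n * p₂)) • (f (j / n) - f 0)))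
      atTop (𝓝 (p₂⁻¹ • (-p₁ • f 0 + p₂ • f'0 + ∫ x in Ioi 0, (f x - f 0) ∂μ))) := by
  have hreflect : Tendsto (fun n : ℕ => reflectionProb p₁ p₂ μ n • (n : ℝ) • (f (1 / n) - f 0))
      atTop (𝓝 f'0) := by
    simpa using (tendsto_reflectionProb p₁ p₂ hI).smul
      (tendsto_natCast_smul_sub_of_hasDerivWithinAt_Ici hder)
  have hsum := (hreflect.const_add (-(p₁ / p₂) • f 0)).add
    ((tendsto_sum_jumps hI hf hdom).const_smul p₂⁻¹)
  have hlimit : -(p₁ / p₂) • f 0 + f'0 + p₂⁻¹ • ∫ x in Ioi 0, (f x - f 0) ∂μ =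
      p₂⁻¹ • (-p₁ • f 0 + p₂ • f'0 + ∫ x in Ioi 0, (f x - f 0) ∂μ) := by
    simp only [smul_add, smul_smul, inv_mul_cancel₀ hp₂, one_smul, mul_neg, div_eq_inv_mul]
  rw [hlimit] at hsum
  refine hsum.congr' ?_
  filter_upwards [eventually_ne_atTop 0] with n hn
  exact (natCast_smul_generator_eq hn p₁ p₂ μ f).symm

end Boundary

theorem Icc_two_sub_one_eq_Ico (k : ℕ) : Finset.Icc 2 (k - 1) = Finset.Ico 2 k := by
  ext j
  simp only [Finset.mem_Icc, Finset.mem_Ico]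
  lia

/-- Convergence of the rescaled generator at the boundary (case `p₂ ≠ 0`, `p₃ = 0`):
`n · D'_n → (-p₁ f(0) + p₂ f'(0) + ∫_{(0,∞)} (f(x) - f(0)) dμ)/p₂`, where
`𝔭₁⁽ⁿ⁾ = 1 - p₁/(np₂) - ∑_{j=2}^{n²-1} μ((j/n,(j+1)/n])/(np₂)` and
`D'_n := -(p₁/(np₂)) f(0) + 𝔭₁⁽ⁿ⁾ (f(1/n) - f(0))
+ ∑_{j=2}^{n²-1}(μ((j/n,(j+1)/n])/(np₂))(f(j/n) - f(0))`. -/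
theorem stmt17 (p₁ p₂ : ℝ) (hp₁ : 0 ≤ p₁) (hp₂ : 0 < p₂)
    (μ : Measure ℝ) (hcar : μ (Set.Iic 0) = 0)
    (hI : IntegrableOn (fun x => min x 1) (Set.Ioi 0) μ)
    (f : ℝ → ℝ) (hf : ContinuousOn f (Set.Ici 0))
    (C : ℝ) (hdom : ∀ x : ℝ, 0 ≤ x → |f x - f 0| ≤ C * min x 1)
    (f'0 : ℝ) (hder : HasDerivWithinAt f f'0 (Set.Ici 0) 0) :
    Filter.Tendsto
      (fun n : ℕ => (n : ℝ) *
        (-(p₁ / ((n : ℝ) * p₂)) * f 0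
          + (1 - p₁ / ((n : ℝ) * p₂) -
              (∑ j ∈ Finset.Icc (2 : ℕ) (n ^ 2 - 1),
                (μ (Set.Ioc ((j : ℝ) / (n : ℝ)) (((j : ℝ) + 1) / (n : ℝ)))).toReal) /
                  ((n : ℝ) * p₂)) * (f (1 / (n : ℝ)) - f 0)
          + ∑ j ∈ Finset.Icc (2 : ℕ) (n ^ 2 - 1),
              (μ (Set.Ioc ((j : ℝ) / (n : ℝ)) (((j : ℝ) + 1) / (n : ℝ)))).toReal /
                  ((n : ℝ) * p₂) * (f ((j : ℝ) / (n : ℝ)) - f 0)))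
      Filter.atTop
      (nhds ((-p₁ * f 0 + p₂ * f'0 + ∫ x in Set.Ioi (0 : ℝ), (f x - f 0) ∂μ) / p₂)) := by
  simp only [Icc_two_sub_one_eq_Ico, div_eq_inv_mul _ p₂]
  exact stmt17_general p₁ p₂ hp₂.ne' μ hI f ((ae_restrict_mem measurableSet_Ioi).mono
    fun x hx => hf.continuousAt (Ici_mem_nhds hx)) C hdom f'0 hder
end
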